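/- Let Ω ⊂ ℝⁿ be an open bounded set, w ∈ L¹(Ω ∩ B_{σ₁}(x₀)) nonnegative, and 0 < σ₂ < σ₁. For δ ∈ (0,1], define 𝒥 := inf { ∫_{B_{σ₁}(x₀) ∩ Ω} w |Dη|² dx : η ∈ C¹_c(B_{σ₁}(x₀)), η ≥ 0, η ≡ 1 on B_{σ₂}(x₀) }. Then 𝒥 ≤ (σ₁−σ₂)^{−1−1/δ} ( ∫_{σ₂}^{σ₁} ( ∫_{∂B_s(x₀) ∩ Ω} w dH^{n−1} )^δ ds )^{1/δ}. -/

import Mathlib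

/-!
The infimum is tested with radial cutoffs `η x = 1 - ∫₀^|x - x₀| ψ`, where `ψ ≥ 0` is continuous,
has integral one and is supported inside `(σ₂, σ₁)`. Then `|Dη x| ≤ ψ |x - x₀|`, and polar
coordinates bound the energy of `η` by `∫ g ψ²`, where `g s` is the integral of `w` over
`∂B_s(x₀) ∩ Ω` (`exists_radial_cutoff`, `polar_le`).

It remains to choose `ψ` (`exists_profile`). The minimum of `∫ g ψ²` under `∫ ψ = 1` is
`(∫ 1 / g)⁻¹`, reached at `ψ` proportional to `1 / g`, and Hölder's inequality gives
`(∫ 1 / g)⁻¹ ≤ (σ₁ - σ₂) ^ (-(1 + 1 / δ)) (∫ g ^ δ) ^ (1 / δ)` (`inv_integral_inv_le`). As `g` may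
vanish and `1 / g` need not be continuous, `g` is replaced by `g + e` with `e` small, and
`1 / (g + e)` is approximated by continuous functions with support in the open interval
(`exists_continuous_approx`).

Polar coordinates in Mathlib are stated for the surface measure `Measure.toSphere`, whereas the
theorem uses the Hausdorff measure `μH[n - 1]`, which in Mathlib has no normalizing constant. Two
comparisons on the unit sphere connect them. The bound `toSphere ≤ μH[n - 1]`
(`toSphere_le_hausdorff`) gives the inequality in the right direction with constant one; it holds
since a spherical set of small diameter `d` lies in a box whose volume shows that its surface
measure is at most `(1 + o(1)) d ^ (n - 1)`. The bound `μH[n - 1] ≤ C • toSphere`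
(`hausdorff_le_smul_toSphere`), from a covering argument, ensures that the sphere-wise Hausdorff
integrals are genuine, finite for almost every radius and integrable in the radius, so that no
Bochner integral takes its junk value `0`.
-/

open MeasureTheory Metric

section Auxiliary

open Set Filter Topology
open scoped ENNReal NNReal Pointwise

/-! ### Surface measure is bounded by Hausdorff measure -/

/-- The part of the cone over `A ⊆ sphere 0 1` lying in the shell `a ≤ ‖x‖ < b` has volume
`(b ^ n - a ^ n)` times that of the unit truncated cone, by homogeneity of Lebesgue measure. -/
lemma cone_shell_volume {n : ℕ} {A : Set (EuclideanSpace ℝ (Fin n))}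
    (hm : MeasurableSet (Ioo (0 : ℝ) 1 • A)) (hA : A ⊆ sphere 0 1)
    {a b : ℝ} (ha : 0 < a) (hab : a ≤ b) :
    volume ((Ioo 0 b • A) \ (Ioo 0 a • A)) =
      ENNReal.ofReal (b ^ n - a ^ n) * volume (Ioo (0 : ℝ) 1 • A) := by
  have key : ∀ c : ℝ, 0 < c → Ioo 0 c • A = c • (Ioo (0 : ℝ) 1 • A) := by
    intro c hc
    rw [← smul_assoc]
    simp [LinearOrderedField.smul_Ioo hc]
  have hfin : volume (Ioo (0 : ℝ) 1 • A) ≠ ∞ := by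
    refine ((measure_mono ?_).trans_lt (measure_ball_lt_top (x := 0) (r := 1))).ne
    rintro _ ⟨t, ht, x, hx, rfl⟩
    have := hA hx
    simp only [mem_sphere_iff_norm, sub_zero] at this
    simp [norm_smul, this, abs_of_pos ht.1, ht.2]
  have hb : 0 < b := ha.trans_le hab
  rw [measure_sdiff (Set.smul_subset_smul_right (Ioo_subset_Ioo_right hab))
    (by rw [key a ha]; exact (hm.const_smul₀ a).nullMeasurableSet)
    (by rw [key a ha, Measure.addHaar_smul_of_nonneg _ ha.le]; finiteness),
    key a ha, key b hb, Measure.addHaar_smul_of_nonneg _ ha.le,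
    Measure.addHaar_smul_of_nonneg _ hb.le, finrank_euclideanSpace_fin,
    ENNReal.ofReal_sub _ (by positivity), ENNReal.sub_mul (fun _ _ => hfin)]

lemma volume_box_le {n : ℕ} (b : OrthonormalBasis (Fin n) ℝ (EuclideanSpace ℝ (Fin n)))
    (l u : Fin n → ℝ) {A : Set (EuclideanSpace ℝ (Fin n))}
    (h : ∀ y ∈ A, ∀ i, b.repr y i ∈ Icc (l i) (u i)) :
    volume A ≤ ∏ i, ENNReal.ofReal (u i - l i) := by
  rw [← Real.volume_Icc_pi]
  have mp := (PiLp.volume_preserving_ofLp (Fin n)).comp b.measurePreserving_repr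
  rw [← mp.measure_preimage measurableSet_Icc.nullMeasurableSet]
  refine measure_mono fun y hy => ?_
  exact ⟨fun i => (h y hy i).1, fun i => (h y hy i).2⟩

/-- A set of reals containing `0` with differences at most `d` lies in an interval of length `d`
that itself contains `0`. -/
lemma exists_interval_of_diam {T : Set ℝ} {d : ℝ} (h0 : (0 : ℝ) ∈ T)
    (hd : ∀ x ∈ T, ∀ y ∈ T, x - y ≤ d) :
    ∃ m : ℝ, m ≤ 0 ∧ 0 ≤ m + d ∧ ∀ x ∈ T, x ∈ Icc m (m + d) := by
  have hbd : BddBelow T := ⟨-d, fun x hx => by linarith [hd 0 h0 x hx]⟩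
  have hup : ∀ x ∈ T, x ≤ sInf T + d := fun x hx => by
    have : x - d ≤ sInf T := le_csInf ⟨0, h0⟩ fun y hy => by linarith [hd x hx y hy]
    linarith
  exact ⟨sInf T, csInf_le hbd h0, hup 0 h0, fun x hx => ⟨csInf_le hbd hx, hup x hx⟩⟩

/-- Sharp volume bound for a thin shell over a spherical set `A` of diameter at most `d ≤ 1`. In an
orthonormal basis starting at a point `θ ∈ A`, the shell lies in a box with sides `(1 + d) * d` in
the directions orthogonal to `θ` and `d + d ^ 2 / 2` in the direction of `θ`: points of `A` have
`θ`-coordinate at least `1 - d ^ 2 / 2`. -/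
lemma volume_shell_le_box {n : ℕ} (hn : 1 ≤ n) {A : Set (EuclideanSpace ℝ (Fin n))}
    (hA : A ⊆ sphere 0 1) {d : ℝ} (hd0 : 0 < d) (hd1 : d ≤ 1)
    (hd : ∀ x ∈ A, ∀ y ∈ A, dist x y ≤ d) :
    volume ((Ioo 0 (1 + d) • A) \ (Ioo (0 : ℝ) 1 • A)) ≤
      ENNReal.ofReal (((1 + d) * d) ^ (n - 1) * (d + d ^ 2 / 2)) := by
  rcases A.eq_empty_or_nonempty with rfl | ⟨θ, hθ⟩
  · simp
  have hnorm : ∀ x ∈ A, ‖x‖ = 1 := fun x hx => by simpa using hA hx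
  set i0 : Fin n := ⟨0, hn⟩
  -- orthonormal basis whose vector of index `0` is `θ`
  obtain ⟨b, hb⟩ := Orthonormal.exists_orthonormalBasis_extension_of_card_eq
    (𝕜 := ℝ) (E := EuclideanSpace ℝ (Fin n)) (ι := Fin n) (by simp) (v := fun _ => θ) (s := {i0})
    (by
      refine ⟨fun i => by simpa using hnorm θ hθ, fun i j hij => ?_⟩
      exact absurd (Subsingleton.elim i j) hij)
  have hb0 : b i0 = θ := hb i0 rfl
  have hT : ∀ i, i ≠ i0 → ∃ m : ℝ, m ≤ 0 ∧ 0 ≤ m + d ∧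
      ∀ x ∈ A, b.repr x i ∈ Icc m (m + d) := by
    intro i hi
    obtain ⟨m, h1, h2, h3⟩ := exists_interval_of_diam (T := (fun x => b.repr x i) '' A) (d := d)
      ⟨θ, hθ, by simpa [← hb0] using hi⟩
      (by
        rintro _ ⟨x, hx, rfl⟩ _ ⟨y, hy, rfl⟩
        have h1 : b.repr x i - b.repr y i = inner ℝ (b i) (x - y) := by
          simp [b.repr_apply_apply, inner_sub_right]
        show b.repr x i - b.repr y i ≤ d
        rw [h1]
        refine (real_inner_le_norm _ _).trans ?_
        rw [b.norm_eq_one, one_mul, ← dist_eq_norm]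
        exact hd x hx y hy)
    exact ⟨m, h1, h2, fun x hx => h3 _ ⟨x, hx, rfl⟩⟩
  choose! m hm1 hm2 hm3 using hT
  let l : Fin n → ℝ := fun i => if i = i0 then 1 - d ^ 2 / 2 else (1 + d) * m i
  let u : Fin n → ℝ := fun i => if i = i0 then 1 + d else (1 + d) * (m i + d)
  refine (volume_box_le b l u ?_).trans (le_of_eq ?_)
  · rintro _ ⟨⟨t, ht, x, hx, rfl⟩, hnot⟩ i
    -- removing the unit truncated cone leaves only dilation factors in `[1, 1 + d)`
    have ht1 : 1 ≤ t := by
      by_contra hlt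
      exact hnot ⟨t, ⟨ht.1, not_le.1 hlt⟩, x, hx, rfl⟩
    have ht2 : t < 1 + d := ht.2
    have hr : b.repr (t • x) i = t * b.repr x i := by simp
    simp only [] at hr ⊢
    rw [hr]
    by_cases hi : i = i0
    · subst hi
      have e1 : b.repr x i0 = inner ℝ θ x := by rw [b.repr_apply_apply, hb0]
      have e2 : inner ℝ θ x = 1 - ‖θ - x‖ ^ 2 / 2 := by
        have := norm_sub_sq_real θ x
        rw [hnorm θ hθ, hnorm x hx] at this
        linarith
      have e3 : ‖θ - x‖ ≤ d := by rw [← dist_eq_norm]; exact hd θ hθ x hx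
      have e4 : ‖θ - x‖ ^ 2 ≤ d ^ 2 := by gcongr
      have e5 := sq_nonneg ‖θ - x‖
      have e6 : d ^ 2 ≤ 1 := pow_le_one₀ hd0.le hd1
      simp only [l, u, if_true, e1, e2]
      constructor
      · nlinarith [mul_nonneg (sub_nonneg.2 ht1) (by linarith : 0 ≤ 1 - ‖θ - x‖ ^ 2 / 2)]
      · nlinarith
    · have := hm3 i hi x hx
      have h1 := hm1 i hi
      have h2 := hm2 i hi
      simp only [l, u, if_neg hi]
      constructor <;> nlinarith [this.1, this.2]
  · rw [← Finset.mul_prod_erase _ _ (Finset.mem_univ i0)]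
    have : ∀ i ∈ Finset.univ.erase i0, ENNReal.ofReal (u i - l i) = ENNReal.ofReal ((1 + d) * d) := by
      intro i hi
      have hi' : i ≠ i0 := Finset.ne_of_mem_erase hi
      simp only [l, u, if_neg hi']
      congr 1; ring
    rw [Finset.prod_congr rfl this, Finset.prod_const, Finset.card_erase_of_mem (Finset.mem_univ _),
      Finset.card_univ, Fintype.card_fin, ← ENNReal.ofReal_pow (by positivity),
      ← ENNReal.ofReal_mul (by simp [l, u]; nlinarith), mul_comm]
    simp only [l, u, if_true]
    congr 2; ring

lemma measurableSet_cone {n : ℕ} {A : Set (sphere (0 : EuclideanSpace ℝ (Fin n)) 1)}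
    (hA : MeasurableSet A) :
    MeasurableSet (Ioo (0 : ℝ) 1 • ((↑) '' A : Set (EuclideanSpace ℝ (Fin n)))) := by
  have h := (MeasurableEmbedding.subtype_coe
    (measurableSet_singleton (0 : EuclideanSpace ℝ (Fin n))).compl).comp
    (Homeomorph.measurableEmbedding (homeomorphUnitSphereProd (EuclideanSpace ℝ (Fin n))).symm)
  have h2 := h.measurableSet_image.2 (hA.prod (measurableSet_Iio (a := (⟨1, mem_Ioi.2 one_pos⟩ : Ioi (0:ℝ)))))
  convert h2 using 1
  ext y
  constructor
  · rintro ⟨t, ht, _, ⟨x, hx, rfl⟩, rfl⟩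
    exact ⟨(x, ⟨t, ht.1⟩), ⟨hx, ht.2⟩, by simp⟩
  · rintro ⟨⟨x, t⟩, ⟨hx, ht⟩, rfl⟩
    exact ⟨t, ⟨t.2, ht⟩, x, ⟨x, hx, rfl⟩, by simp⟩

/-- The surface measure of a spherical set of diameter at most `d ≤ 1` is at most
`(1 + d) ^ n * d ^ (n - 1)`. The leading constant `1` as `d → 0` matches the normalization of
Mathlib's Hausdorff measure, whose covering sums use `diam ^ (n - 1)`. -/
lemma toSphere_le_of_diam {n : ℕ} (hn : 1 ≤ n)
    {A : Set (sphere (0 : EuclideanSpace ℝ (Fin n)) 1)} (hA : MeasurableSet A)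
    {d : ℝ} (hd0 : 0 < d) (hd1 : d ≤ 1) (hd : ediam A ≤ ENNReal.ofReal d) :
    (volume : Measure (EuclideanSpace ℝ (Fin n))).toSphere A ≤
      ENNReal.ofReal ((1 + d) ^ n * d ^ (n - 1)) := by
  have hsub : ((↑) '' A : Set (EuclideanSpace ℝ (Fin n))) ⊆ sphere 0 1 := by
    rintro _ ⟨x, -, rfl⟩; exact x.2
  have hcone := measurableSet_cone hA
  have h1 := volume_shell_le_box hn hsub hd0 hd1 (by
    rintro _ ⟨x, hx, rfl⟩ _ ⟨y, hy, rfl⟩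
    have := (edist_le_ediam_of_mem hx hy).trans hd
    rw [edist_dist] at this
    exact (ENNReal.ofReal_le_ofReal_iff hd0.le).1 this)
  rw [cone_shell_volume hcone hsub one_pos (by linarith)] at h1
  have hfin : volume (Ioo (0 : ℝ) 1 • ((↑) '' A : Set (EuclideanSpace ℝ (Fin n)))) ≠ ∞ := by
    have h2 := measure_ne_top (volume : Measure (EuclideanSpace ℝ (Fin n))).toSphere A
    rw [Measure.toSphere_apply' _ hA, finrank_euclideanSpace_fin] at h2
    intro h
    rw [h, ENNReal.mul_top (by simp; omega)] at h2
    exact h2 rfl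
  rw [Measure.toSphere_apply' _ hA, finrank_euclideanSpace_fin]
  set v := volume (Ioo (0 : ℝ) 1 • ((↑) '' A : Set (EuclideanSpace ℝ (Fin n))))
  lift v to ℝ≥0 using hfin with v'
  rw [← ENNReal.ofReal_coe_nnreal, ← ENNReal.ofReal_mul
    (by simp; exact one_le_pow₀ (by linarith))] at h1
  rw [ENNReal.ofReal_le_ofReal_iff (by positivity)] at h1
  rw [← ENNReal.ofReal_coe_nnreal, ← ENNReal.ofReal_natCast, ← ENNReal.ofReal_mul (by positivity)]
  refine ENNReal.ofReal_le_ofReal ?_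
  have hb : (n : ℝ) * d ≤ (1 + d) ^ n - 1 ^ n := by
    have := one_add_mul_le_pow (a := d) (by linarith) n
    simp; linarith
  have hv : (0 : ℝ) ≤ v' := v'.2
  have h3 : (n * v' : ℝ) * d ≤ ((1 + d) ^ (n - 1) * d ^ (n - 1) * (1 + d / 2)) * d := by
    rw [mul_pow] at h1
    nlinarith
  have h4 := le_of_mul_le_mul_right h3 hd0
  refine h4.trans ?_
  have h5 : (1 + d) ^ n = (1 + d) ^ (n - 1) * (1 + d) := by
    rw [← pow_succ]; congr 1; omega
  rw [h5]
  have h6 : 0 ≤ (1 + d) ^ (n - 1) * d ^ (n - 1) := by positivity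
  nlinarith

/-- The surface measure on the unit sphere is bounded by `μH[n - 1]`. Mathlib's Hausdorff measure
carries no normalizing constant, so this is an inequality, not an equality. -/
lemma toSphere_le_hausdorff {n : ℕ} (hn : 2 ≤ n) :
    (volume : Measure (EuclideanSpace ℝ (Fin n))).toSphere ≤ μH[(n : ℝ) - 1] := by
  set σ := (volume : Measure (EuclideanSpace ℝ (Fin n))).toSphere
  have hcast : ((n - 1 : ℕ) : ℝ) = (n : ℝ) - 1 := by
    rw [Nat.cast_sub (by omega)]; simp
  -- on sets of small diameter `d`, the surface measure is at most `(1 + d) ^ n * d ^ (n - 1)`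
  have hset : ∀ s : Set (sphere (0 : EuclideanSpace ℝ (Fin n)) 1), ∀ d : ℝ, 0 ≤ d → d < 1 →
      ediam s = ENNReal.ofReal d → σ s ≤ ENNReal.ofReal ((1 + d) ^ n * d ^ (n - 1)) := by
    intro s d hd0 hd1 hs
    have hlim : Tendsto (fun t : ℝ => ENNReal.ofReal ((1 + t) ^ n * t ^ (n - 1))) (𝓝[>] d)
        (𝓝 (ENNReal.ofReal ((1 + d) ^ n * d ^ (n - 1)))) := by
      refine (Continuous.tendsto ?_ d).mono_left nhdsWithin_le_nhds
      exact ENNReal.continuous_ofReal.comp (by fun_prop)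
    -- the limit `t ↓ d` covers `d = 0`, and passing to the closure supplies measurability
    refine ge_of_tendsto hlim ?_
    filter_upwards [Ioo_mem_nhdsGT hd1] with t ht
    refine (measure_mono subset_closure).trans ?_
    refine toSphere_le_of_diam (by omega) isClosed_closure.measurableSet (hd0.trans_lt ht.1)
      ht.2.le ?_
    rw [ediam_closure, hs]
    exact ENNReal.ofReal_le_ofReal ht.1.le
  have hε : ∀ ε : ℝ, ε ∈ Ioo (0 : ℝ) 1 →
      σ ≤ ENNReal.ofReal ((1 + ε) ^ n) • (μH[(n : ℝ) - 1] : Measure _) := by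
    intro ε hε
    have hc0 : ENNReal.ofReal ((1 + ε) ^ n) ≠ 0 := by
      have := hε.1
      simp only [ne_eq, ENNReal.ofReal_eq_zero, not_le]; positivity
    have h := Measure.le_hausdorffMeasure ((n : ℝ) - 1) ((ENNReal.ofReal ((1 + ε) ^ n))⁻¹ • σ)
      (ENNReal.ofReal ε) (by simpa using hε.1) (fun s hs => by
        have hne : ediam s ≠ ∞ := (hs.trans_lt ENNReal.ofReal_lt_top).ne
        obtain ⟨d, hd0, hd⟩ : ∃ d : ℝ, 0 ≤ d ∧ ediam s = ENNReal.ofReal d :=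
          ⟨(ediam s).toReal, ENNReal.toReal_nonneg, (ENNReal.ofReal_toReal hne).symm⟩
        have hdε : d ≤ ε := by
          rw [hd] at hs
          exact (ENNReal.ofReal_le_ofReal_iff hε.1.le).1 hs
        rw [Measure.smul_apply, smul_eq_mul, ENNReal.inv_mul_le_iff hc0 ENNReal.ofReal_ne_top]
        refine (hset s d hd0 (hdε.trans_lt hε.2) hd).trans ?_
        rw [hd, ← hcast, ENNReal.rpow_natCast, ← ENNReal.ofReal_pow hd0,
          ← ENNReal.ofReal_mul (by have := hε.1; positivity)]
        gcongr)
    intro s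
    have := h s
    rw [Measure.smul_apply, smul_eq_mul, ENNReal.inv_mul_le_iff hc0 ENNReal.ofReal_ne_top] at this
    simpa using this
  intro s
  have hlim : Tendsto (fun ε : ℝ => ENNReal.ofReal ((1 + ε) ^ n) * μH[(n : ℝ) - 1] s) (𝓝[>] 0)
      (𝓝 (ENNReal.ofReal ((1 + 0) ^ n) * μH[(n : ℝ) - 1] s)) := by
    refine ENNReal.Tendsto.mul_const ?_ (Or.inl (by simp))
    refine (Continuous.tendsto ?_ 0).mono_left nhdsWithin_le_nhds
    exact ENNReal.continuous_ofReal.comp (by fun_prop)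
  simp only [add_zero, one_pow, ENNReal.ofReal_one, one_mul] at hlim
  refine ge_of_tendsto hlim ?_
  filter_upwards [Ioo_mem_nhdsGT one_pos] with ε h
  simpa using hε ε h s

/-! ### Hausdorff measure is bounded by a multiple of surface measure -/

/-- A maximal `r`-separated subset of a compact set is finite, and the balls of radius `r` around
its points cover the set. -/
lemma exists_separated_net {X : Type*} [PseudoMetricSpace X] {K : Set X} (hK : IsCompact K)
    {r : ℝ} (hr : 0 < r) :
    ∃ F : Finset X, (F : Set X) ⊆ K ∧ (∀ x ∈ F, ∀ y ∈ F, x ≠ y → r ≤ dist x y) ∧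
      K ⊆ ⋃ x : F, closedBall (x : X) r := by
  lift r to ℝ≥0 using hr.le
  have hr' : r / 2 ≠ 0 := by
    have : 0 < r := hr
    positivity
  obtain ⟨N, -, hNf, hN⟩ := exists_finite_isCover_of_isCompact hr' hK
  have hp : packingNumber r K ≠ ⊤ := by
    have h1 := packingNumber_two_mul_le_externalCoveringNumber (r / 2) K
    rw [mul_div_cancel₀ _ two_ne_zero] at h1
    exact ((h1.trans hN.externalCoveringNumber_le_encard).trans_lt hNf.encard_lt_top).ne
  have hf : (maximalSeparatedSet r K).Finite := by
    rw [← encard_ne_top_iff, encard_maximalSeparatedSet hp]; exact hp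
  refine ⟨hf.toFinset, by simpa using maximalSeparatedSet_subset, fun x hx y hy hxy => ?_, ?_⟩
  · have : (r : ℝ≥0∞) < edist x y := isSeparated_maximalSeparatedSet (ε := r) (A := K) (by simpa using hx)
      (by simpa using hy) hxy
    rw [edist_nndist] at this
    exact_mod_cast this.le
  · have := isCover_iff_subset_iUnion_closedBall.1 (isCover_maximalSeparatedSet hp)
    refine this.trans fun z hz => ?_
    simp only [mem_iUnion, exists_prop] at hz ⊢
    obtain ⟨y, hy, hz⟩ := hz
    exact ⟨⟨y, by simpa using hy⟩, hz⟩

/-- The half-radius balls around a separated set on the sphere are disjoint and lie in a thin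
spherical shell over a thickening of the set. Comparing volumes bounds the covering sum
`F.card * (2 * r) ^ (n - 1)` of the Hausdorff measure. -/
lemma card_net_le {n : ℕ} (hn : 1 ≤ n) {K : Set (sphere (0 : EuclideanSpace ℝ (Fin n)) 1)}
    {r : ℝ} (hr0 : 0 < r) (hr1 : r ≤ 1)
    (F : Finset (sphere (0 : EuclideanSpace ℝ (Fin n)) 1)) (hFK : (F : Set _) ⊆ K)
    (hsep : ∀ x ∈ F, ∀ y ∈ F, x ≠ y → r ≤ dist x y) :
    F.card * ENNReal.ofReal ((2 * r) ^ (n - 1)) ≤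
      ENNReal.ofReal (8 ^ n / (volume : Measure (EuclideanSpace ℝ (Fin n))).real (ball 0 1)) *
      (volume : Measure (EuclideanSpace ℝ (Fin n))).toSphere (cthickening r K) := by
  set A := cthickening r K with hAdef
  have hA : MeasurableSet A := isClosed_cthickening.measurableSet
  set A' : Set (EuclideanSpace ℝ (Fin n)) := (↑) '' A with hA'
  have hsub : A' ⊆ sphere 0 1 := by
    rintro _ ⟨x, -, rfl⟩; exact x.2
  have hcone := measurableSet_cone hA
  have hvol := cone_shell_volume hcone hsub (a := 1 - r / 2) (b := 1 + r / 2) (by linarith)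
    (by linarith)
  have hballs : (⋃ x ∈ F, ball (x : EuclideanSpace ℝ (Fin n)) (r / 2)) ⊆
      (Ioo 0 (1 + r / 2) • A') \ (Ioo 0 (1 - r / 2) • A') := by
    intro y hy
    simp only [mem_iUnion, exists_prop] at hy
    obtain ⟨x, hx, hy⟩ := hy
    have hx1 : ‖(x : EuclideanSpace ℝ (Fin n))‖ = 1 := by simp
    rw [mem_ball, dist_eq_norm] at hy
    have hy1 : |‖y‖ - 1| < r / 2 := by
      rw [← hx1]; exact (abs_norm_sub_norm_le _ _).trans_lt hy
    rw [abs_lt] at hy1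
    have hy0 : 0 < ‖y‖ := by linarith
    have hu : ‖(‖y‖⁻¹ • y)‖ = 1 := by
      rw [norm_smul, norm_inv, norm_norm, inv_mul_cancel₀ hy0.ne']
    have huy : ‖y‖ • ‖y‖⁻¹ • y = y := by rw [smul_smul, mul_inv_cancel₀ hy0.ne', one_smul]
    refine ⟨⟨‖y‖, ⟨hy0, by linarith⟩, ‖y‖⁻¹ • y, ⟨⟨‖y‖⁻¹ • y, by simpa using hu⟩, ?_, rfl⟩, huy⟩,
      ?_⟩
    · refine mem_cthickening_of_dist_le _ x _ _ (hFK hx) ?_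
      rw [Subtype.dist_eq]
      change dist (‖y‖⁻¹ • y) (x : EuclideanSpace ℝ (Fin n)) ≤ r
      have h1 : dist (‖y‖⁻¹ • y) y ≤ r / 2 := by
        rw [dist_eq_norm]
        have : ‖y‖⁻¹ • y - y = (1 - ‖y‖) • (‖y‖⁻¹ • y) := by
          rw [sub_smul, one_smul, huy]
        rw [this, norm_smul, hu, mul_one, Real.norm_eq_abs, abs_le]
        constructor <;> linarith
      have h2 : dist y (x : EuclideanSpace ℝ (Fin n)) ≤ r / 2 := by
        rw [dist_eq_norm]; exact hy.le
      linarith [dist_triangle (‖y‖⁻¹ • y) y (x : EuclideanSpace ℝ (Fin n))]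
    · rintro ⟨t, ht, z, hz, hzy⟩
      have hz1 : ‖z‖ = 1 := by simpa using hsub hz
      have : ‖y‖ = t := by
        rw [← hzy]; simp [norm_smul, hz1, abs_of_pos ht.1]
      linarith [ht.2]
  have hdisj : (F : Set (sphere (0 : EuclideanSpace ℝ (Fin n)) 1)).PairwiseDisjoint
      fun x => ball (x : EuclideanSpace ℝ (Fin n)) (r / 2) := by
    intro x hx y hy hxy
    refine ball_disjoint_ball ?_
    have := hsep x hx y hy hxy
    rw [Subtype.dist_eq] at this
    linarith
  have h1 := measure_mono (μ := volume) hballs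
  rw [measure_biUnion_finset hdisj (fun _ _ => measurableSet_ball), hvol] at h1
  have hball : ∀ x ∈ F, volume (ball (x : EuclideanSpace ℝ (Fin n)) (r / 2)) =
      ENNReal.ofReal ((r / 2) ^ n) * volume (ball (0 : EuclideanSpace ℝ (Fin n)) 1) := by
    intro x _
    rw [Measure.addHaar_ball_of_pos _ _ (by positivity), finrank_euclideanSpace_fin]
  rw [Finset.sum_congr rfl hball, Finset.sum_const, nsmul_eq_mul] at h1
  have hfin : volume (Ioo (0 : ℝ) 1 • A') ≠ ∞ := by
    have h2 := measure_ne_top (volume : Measure (EuclideanSpace ℝ (Fin n))).toSphere A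
    rw [Measure.toSphere_apply' _ hA, finrank_euclideanSpace_fin] at h2
    intro h
    rw [h, ENNReal.mul_top (by simp; omega)] at h2
    exact h2 rfl
  rw [Measure.toSphere_apply' _ hA, finrank_euclideanSpace_fin]
  rw [← hA']
  have hω0 : 0 < (volume : Measure (EuclideanSpace ℝ (Fin n))).real (ball 0 1) :=
    ENNReal.toReal_pos (measure_ball_pos _ _ one_pos).ne' measure_ball_lt_top.ne
  set ω := (volume : Measure (EuclideanSpace ℝ (Fin n))).real (ball 0 1) with hω
  have hωe : volume (ball (0 : EuclideanSpace ℝ (Fin n)) 1) = ENNReal.ofReal ω :=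
    (ENNReal.ofReal_toReal measure_ball_lt_top.ne).symm
  rw [hωe] at h1
  set v := (volume (Ioo (0 : ℝ) 1 • A')).toReal with hv
  have hve : volume (Ioo (0 : ℝ) 1 • A') = ENNReal.ofReal v := (ENNReal.ofReal_toReal hfin).symm
  have hv0 : 0 ≤ v := ENNReal.toReal_nonneg
  have hab : (1 - r / 2) ^ n ≤ (1 + r / 2) ^ n := by
    apply pow_le_pow_left₀ <;> linarith
  rw [hve] at h1 ⊢
  have hc0 : (0 : ℝ) ≤ F.card := Nat.cast_nonneg _
  have hn0 : (0 : ℝ) ≤ n := Nat.cast_nonneg _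
  have hr2 : 0 ≤ (r / 2) ^ n := pow_nonneg (by linarith) _
  have hr3 : 0 ≤ (2 * r) ^ (n - 1) := pow_nonneg (by linarith) _
  have h8 : 0 ≤ 8 ^ n / ω := div_nonneg (pow_nonneg (by norm_num) _) hω0.le
  rw [← ENNReal.ofReal_natCast, ← ENNReal.ofReal_mul hr2,
    ← ENNReal.ofReal_mul hc0, ← ENNReal.ofReal_mul (by linarith),
    ENNReal.ofReal_le_ofReal_iff (mul_nonneg (by linarith) hv0)] at h1
  rw [← ENNReal.ofReal_natCast, ← ENNReal.ofReal_natCast, ← ENNReal.ofReal_mul hc0,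
    ← ENNReal.ofReal_mul hn0, ← ENNReal.ofReal_mul h8]
  refine ENNReal.ofReal_le_ofReal ?_
  have hd : (1 + r / 2) ^ n - (1 - r / 2) ^ n ≤ r * n * 2 ^ (n - 1) := by
    refine (le_abs_self _).trans ((abs_pow_sub_pow_le _ _ _).trans ?_)
    have e1 : |1 + r / 2 - (1 - r / 2)| = r := by
      rw [show 1 + r / 2 - (1 - r / 2) = r by ring, abs_of_pos hr0]
    rw [e1]
    gcongr
    rw [abs_of_pos (by linarith), abs_of_pos (by linarith)]
    exact max_le (by linarith) (by linarith)
  obtain ⟨m, rfl⟩ : ∃ m, n = m + 1 := ⟨n - 1, by omega⟩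
  simp only [Nat.add_sub_cancel] at *
  have h2 : (F.card : ℝ) * ((r / 2) ^ (m + 1) * ω) ≤ r * ((m + 1 : ℕ) : ℝ) * 2 ^ m * v :=
    h1.trans (by gcongr)
  rw [div_mul_eq_mul_div, le_div_iff₀ hω0]
  have h3 : (F.card : ℝ) * (2 * r) ^ m * ω * r =
      2 * 4 ^ m * ((F.card : ℝ) * ((r / 2) ^ (m + 1) * ω)) := by
    have : (2 * r) ^ m * r = 2 * 4 ^ m * (r / 2) ^ (m + 1) := by
      rw [pow_succ (r / 2), show 2 * r = 4 * (r / 2) by ring, mul_pow]; ring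
    linear_combination (F.card * ω : ℝ) * this
  have h4 : 2 * 4 ^ m * (r * ((m + 1 : ℕ) : ℝ) * 2 ^ m * v) ≤
      8 ^ (m + 1) * (((m + 1 : ℕ) : ℝ) * v) * r := by
    have : (8 : ℝ) ^ m = 4 ^ m * 2 ^ m := by rw [← mul_pow]; norm_num
    rw [pow_succ, this]
    have : 0 ≤ (4 : ℝ) ^ m * 2 ^ m * (((m + 1 : ℕ) : ℝ) * v) * r := by positivity
    linarith
  refine le_of_mul_le_mul_right ?_ hr0
  rw [h3]
  exact (mul_le_mul_of_nonneg_left h2 (by positivity)).trans h4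

/-- Covering a compact set by balls around finer and finer nets bounds its Hausdorff measure by a
multiple of the surface measure of its closed thickenings, which decrease to that of the set. -/
lemma hausdorff_compact_le {n : ℕ} (hn : 2 ≤ n)
    {K : Set (sphere (0 : EuclideanSpace ℝ (Fin n)) 1)} (hK : IsCompact K) :
    μH[(n : ℝ) - 1] K ≤
      ENNReal.ofReal (8 ^ n / (volume : Measure (EuclideanSpace ℝ (Fin n))).real (ball 0 1)) *
      (volume : Measure (EuclideanSpace ℝ (Fin n))).toSphere K := by
  have hcast : ((n - 1 : ℕ) : ℝ) = (n : ℝ) - 1 := by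
    rw [Nat.cast_sub (by omega)]; simp
  set C := ENNReal.ofReal (8 ^ n / (volume : Measure (EuclideanSpace ℝ (Fin n))).real (ball 0 1))
  have hr : ∀ k : ℕ, (0 : ℝ) < 1 / (k + 1) := fun k => Nat.one_div_pos_of_nat
  choose F hF1 hF2 hF3 using fun k : ℕ => exists_separated_net hK (hr k)
  have hr0 : Tendsto (fun k : ℕ => (1 : ℝ) / (k + 1)) atTop (𝓝 0) :=
    tendsto_one_div_add_atTop_nhds_zero_nat
  have hdiam : ∀ (k : ℕ) (i : F k),
      ediam (closedBall (i : sphere (0 : EuclideanSpace ℝ (Fin n)) 1) (1 / ((k : ℝ) + 1))) ≤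
        ENNReal.ofReal (2 * (1 / ((k : ℝ) + 1))) := by
    intro k i
    refine ediam_le fun x hx y hy => ?_
    rw [edist_dist]
    refine ENNReal.ofReal_le_ofReal ?_
    rw [mem_closedBall] at hx hy
    linarith [dist_triangle_right x y i.1]
  have h := Measure.hausdorffMeasure_le_liminf_sum ((n : ℝ) - 1) K (l := atTop)
    (fun k : ℕ => ENNReal.ofReal (2 * (1 / ((k : ℝ) + 1))))
    (by
      have := ENNReal.tendsto_ofReal (hr0.const_mul 2)
      simpa using this)
    (fun k (i : F k) => closedBall (i : sphere (0 : EuclideanSpace ℝ (Fin n)) 1)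
      (1 / ((k : ℝ) + 1)))
    (Eventually.of_forall hdiam) (Eventually.of_forall hF3)
  refine h.trans ?_
  have hlim : Tendsto (fun k : ℕ =>
      C * (volume : Measure (EuclideanSpace ℝ (Fin n))).toSphere (cthickening (1 / ((k : ℝ) + 1)) K))
      atTop (𝓝 (C * (volume : Measure (EuclideanSpace ℝ (Fin n))).toSphere K)) :=
    ENNReal.Tendsto.const_mul ((tendsto_measure_cthickening_of_isCompact hK).comp hr0)
      (Or.inr ENNReal.ofReal_ne_top)
  rw [← hlim.liminf_eq]
  refine liminf_le_liminf (Eventually.of_forall fun k => ?_)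
  refine le_trans ?_ (card_net_le (by omega) (hr k) ?_ (F k) (hF1 k) (hF2 k))
  · refine (Finset.sum_le_sum (g := fun _ => ENNReal.ofReal ((2 * (1 / ((k : ℝ) + 1))) ^ (n - 1)))
      fun i _ => ?_).trans ?_
    · rw [← hcast, ENNReal.rpow_natCast, ENNReal.ofReal_pow (by have := hr k; positivity)]
      gcongr
      exact hdiam k i
    · simp
  · rw [div_le_one (by positivity)]
    have : (0 : ℝ) ≤ k := Nat.cast_nonneg k
    linarith

/-- The Hausdorff measure on the unit sphere is bounded by a multiple of the surface measure. The
value of the constant is immaterial; what matters is that `μH[n - 1]` is finite on the sphere and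
that integrability transfers from the surface measure to it. -/
lemma hausdorff_le_smul_toSphere {n : ℕ} (hn : 2 ≤ n) :
    (μH[(n : ℝ) - 1] : Measure (sphere (0 : EuclideanSpace ℝ (Fin n)) 1)) ≤
      ENNReal.ofReal (8 ^ n / (volume : Measure (EuclideanSpace ℝ (Fin n))).real (ball 0 1)) •
      (volume : Measure (EuclideanSpace ℝ (Fin n))).toSphere := by
  have : IsFiniteMeasure (μH[(n : ℝ) - 1] : Measure (sphere (0 : EuclideanSpace ℝ (Fin n)) 1)) :=
    ⟨(hausdorff_compact_le hn isCompact_univ).trans_lt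
      (ENNReal.mul_lt_top ENNReal.ofReal_lt_top (measure_lt_top _ _))⟩
  refine Measure.le_iff.2 fun s hs => ?_
  rw [hs.measure_eq_iSup_isCompact_of_ne_top (measure_ne_top _ _)]
  refine iSup₂_le fun K hKs => iSup_le fun hK => ?_
  refine (hausdorff_compact_le hn hK).trans ?_
  rw [Measure.smul_apply, smul_eq_mul]
  gcongr

/-! ### Polar coordinates with Hausdorff measure -/

/-- Scaling law: `μH[n - 1]` on `sphere x₀ s` is `s ^ (n - 1)` times the image of `μH[n - 1]` on
the unit sphere. -/
lemma restrict_sphere_hausdorff {n : ℕ} (hn : 2 ≤ n) (x₀ : EuclideanSpace ℝ (Fin n))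
    {s : ℝ} (hs : 0 < s) :
    (μH[(n : ℝ) - 1] : Measure (EuclideanSpace ℝ (Fin n))).restrict (sphere x₀ s) =
      ENNReal.ofReal (s ^ (n - 1)) •
        Measure.map (fun θ : sphere (0 : EuclideanSpace ℝ (Fin n)) 1 =>
          x₀ + s • (θ : EuclideanSpace ℝ (Fin n))) μH[(n : ℝ) - 1] := by
  have hcast : ((n - 1 : ℕ) : ℝ) = (n : ℝ) - 1 := by
    rw [Nat.cast_sub (by omega)]; simp
  have hd : (0 : ℝ) ≤ (n : ℝ) - 1 := by rw [← hcast]; positivity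
  have hf : Measurable (fun θ : sphere (0 : EuclideanSpace ℝ (Fin n)) 1 =>
      x₀ + s • (θ : EuclideanSpace ℝ (Fin n))) := by
    apply Continuous.measurable; fun_prop
  ext T hT
  rw [Measure.restrict_apply hT, Measure.smul_apply, Measure.map_apply hf hT, smul_eq_mul]
  have hset : T ∩ sphere x₀ s = (fun y => x₀ + y) '' (s • ((↑) ''
      ((fun θ : sphere (0 : EuclideanSpace ℝ (Fin n)) 1 =>
        x₀ + s • (θ : EuclideanSpace ℝ (Fin n))) ⁻¹' T) : Set (EuclideanSpace ℝ (Fin n)))) := by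
    ext y
    constructor
    · rintro ⟨hyT, hy⟩
      have hy' : ‖y - x₀‖ = s := by simpa [dist_eq_norm] using hy
      have hyy : x₀ + s • s⁻¹ • (y - x₀) = y := by
        rw [smul_smul, mul_inv_cancel₀ hs.ne', one_smul]; abel
      refine ⟨_, ⟨_, ⟨⟨s⁻¹ • (y - x₀), ?_⟩, ?_, rfl⟩, rfl⟩, hyy⟩
      · simp [norm_smul, hy', abs_of_pos hs, hs.ne']
      · simpa [hyy] using hyT
    · rintro ⟨_, ⟨_, ⟨θ, hθ, rfl⟩, rfl⟩, rfl⟩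
      refine ⟨hθ, ?_⟩
      simp [norm_smul, abs_of_pos hs]
  rw [hset, (isometry_add_left x₀).hausdorffMeasure_image (Or.inl hd),
    Measure.hausdorffMeasure_smul₀ hd hs.ne',
    isometry_subtype_coe.hausdorffMeasure_image (Or.inl hd), ENNReal.smul_def, smul_eq_mul,
    ← hcast, NNReal.rpow_natCast]
  congr 1
  rw [ENNReal.ofReal_pow hs.le, ENNReal.coe_pow]
  congr 1
  rw [← Real.enorm_of_nonneg hs.le]; rfl

lemma integral_sphere_hausdorff {n : ℕ} (hn : 2 ≤ n) (x₀ : EuclideanSpace ℝ (Fin n))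
    (W : EuclideanSpace ℝ (Fin n) → ℝ) {s : ℝ} (hs : 0 < s) :
    ∫ x in sphere x₀ s, W x ∂μH[(n : ℝ) - 1] =
      s ^ (n - 1) * ∫ θ : sphere (0 : EuclideanSpace ℝ (Fin n)) 1,
        W (x₀ + s • (θ : EuclideanSpace ℝ (Fin n))) ∂μH[(n : ℝ) - 1] := by
  have hf : MeasurableEmbedding (fun θ : sphere (0 : EuclideanSpace ℝ (Fin n)) 1 =>
      x₀ + s • (θ : EuclideanSpace ℝ (Fin n))) := by
    refine (Continuous.isClosedEmbedding (by fun_prop) ?_).measurableEmbedding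
    intro a b hab
    have h1 : s • (a : EuclideanSpace ℝ (Fin n)) = s • (b : EuclideanSpace ℝ (Fin n)) :=
      add_left_cancel hab
    exact Subtype.ext (smul_right_injective _ hs.ne' h1)
  rw [restrict_sphere_hausdorff hn x₀ hs, integral_smul_measure, hf.integral_map,
    ENNReal.toReal_ofReal (by positivity), smul_eq_mul]

/-- `Measure.volumeIoiPow k` is the measure `s ^ k ds` on `Ioi 0`, the radial factor of Lebesgue
measure in polar coordinates. -/
lemma integral_volumeIoiPow (k : ℕ) (f : ℝ → ℝ) :
    ∫ s : Ioi (0 : ℝ), f s ∂(Measure.volumeIoiPow k) = ∫ s in Ioi (0 : ℝ), s ^ k * f s := by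
  simp only [Measure.volumeIoiPow, ENNReal.ofReal]
  rw [integral_withDensity_eq_integral_smul,
    integral_subtype_comap measurableSet_Ioi fun a ↦ Real.toNNReal (a ^ k) • f a,
    setIntegral_congr_fun measurableSet_Ioi fun x hx ↦ ?_]
  · rw [NNReal.smul_def, Real.coe_toNNReal _ (pow_nonneg hx.out.le _), smul_eq_mul]
  · exact (measurable_subtype_coe.pow_const _).real_toNNReal

lemma integrable_volumeIoiPow {k : ℕ} {f : ℝ → ℝ}
    (hf : Integrable (fun s : Ioi (0 : ℝ) => f s) (Measure.volumeIoiPow k)) :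
    IntegrableOn (fun s => s ^ k * f s) (Ioi 0) := by
  rw [Measure.volumeIoiPow, integrable_withDensity_iff_integrable_smul' (by fun_prop) (by simp)] at hf
  rw [integrableOn_iff_comap_subtypeVal measurableSet_Ioi]
  refine hf.congr (.of_forall ?_)
  rintro ⟨x, hx : 0 < x⟩
  simp (disch := positivity) [ENNReal.toReal_ofReal]

/-- Integration in polar coordinates, with integrability on the product space. -/
lemma polar_integrable {n : ℕ} (hn : 2 ≤ n) {u : EuclideanSpace ℝ (Fin n) → ℝ}
    (hu : Integrable u) :
    Integrable (fun p : sphere (0 : EuclideanSpace ℝ (Fin n)) 1 × Ioi (0 : ℝ) =>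
      u ((p.2 : ℝ) • (p.1 : EuclideanSpace ℝ (Fin n))))
      ((volume : Measure (EuclideanSpace ℝ (Fin n))).toSphere.prod
        (Measure.volumeIoiPow (n - 1))) ∧
    ∫ y, u y = ∫ p : sphere (0 : EuclideanSpace ℝ (Fin n)) 1 × Ioi (0 : ℝ),
      u ((p.2 : ℝ) • (p.1 : EuclideanSpace ℝ (Fin n)))
      ∂((volume : Measure (EuclideanSpace ℝ (Fin n))).toSphere.prod
        (Measure.volumeIoiPow (n - 1))) := by
  have : Nontrivial (EuclideanSpace ℝ (Fin n)) := by
    have : Nontrivial (Fin n) := Fin.nontrivial_iff_two_le.2 hn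
    infer_instance
  have mp := (volume : Measure (EuclideanSpace ℝ (Fin n))).measurePreserving_homeomorphUnitSphereProd
  rw [finrank_euclideanSpace_fin] at mp
  have he := (homeomorphUnitSphereProd (EuclideanSpace ℝ (Fin n))).measurableEmbedding
  have hcomp : (fun p : sphere (0 : EuclideanSpace ℝ (Fin n)) 1 × Ioi (0 : ℝ) =>
      u ((p.2 : ℝ) • (p.1 : EuclideanSpace ℝ (Fin n)))) ∘
      (homeomorphUnitSphereProd (EuclideanSpace ℝ (Fin n))) =
        fun y : ({0}ᶜ : Set (EuclideanSpace ℝ (Fin n))) => u y := by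
    ext y
    have := congrArg Subtype.val
      ((homeomorphUnitSphereProd (EuclideanSpace ℝ (Fin n))).symm_apply_apply y)
    rw [homeomorphUnitSphereProd_symm_apply_coe] at this
    simp only [Function.comp, this]
  constructor
  · rw [← mp.integrable_comp_emb he, hcomp]
    exact (integrableOn_iff_comap_subtypeVal (measurableSet_singleton _).compl).1 hu.integrableOn
  · have h0 : ∫ y, u y = ∫ y in {0}ᶜ, u y := by rw [restrict_compl_singleton]
    rw [h0, ← mp.integral_comp he, ← integral_subtype_comap (measurableSet_singleton _).compl]
    exact integral_congr_ae (.of_forall fun y => (congrFun hcomp y).symm)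

/-- One-sided coarea inequality with respect to Hausdorff measure: for `W ≥ 0` integrable, the
sphere-wise integrals are integrable in the radius, and the integral of `W` against a radial
function `φ` is at most the radial integral of `φ` against them. It is not an identity because
`μH[n - 1]` is unnormalized. -/
lemma polar_le {n : ℕ} (hn : 2 ≤ n) (x₀ : EuclideanSpace ℝ (Fin n))
    {W : EuclideanSpace ℝ (Fin n) → ℝ} (hW0 : ∀ x, 0 ≤ W x) (hWi : Integrable W) :
    IntegrableOn (fun s => ∫ x in sphere x₀ s, W x ∂μH[(n : ℝ) - 1]) (Ioi 0) ∧
    ∀ φ : ℝ → ℝ, Continuous φ → (∀ s, 0 ≤ φ s) → (∃ M, ∀ s, φ s ≤ M) →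
      ∫ x, W x * φ (dist x x₀) ≤
        ∫ s in Ioi (0 : ℝ), φ s * ∫ x in sphere x₀ s, W x ∂μH[(n : ℝ) - 1] := by
  set S := sphere (0 : EuclideanSpace ℝ (Fin n)) 1
  set σ := (volume : Measure (EuclideanSpace ℝ (Fin n))).toSphere
  set ν := Measure.volumeIoiPow (n - 1)
  set μ : Measure S := μH[(n : ℝ) - 1] with hμ
  set C := ENNReal.ofReal (8 ^ n / (volume : Measure (EuclideanSpace ℝ (Fin n))).real (ball 0 1))
  have hle : μ ≤ C • σ := hausdorff_le_smul_toSphere hn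
  have hge : σ ≤ μ := toSphere_le_hausdorff hn
  have : IsFiniteMeasure μ := ⟨(hle univ).trans_lt (by
    rw [Measure.smul_apply, smul_eq_mul]
    exact ENNReal.mul_lt_top ENNReal.ofReal_lt_top (measure_lt_top _ _))⟩
  have hprod : μ.prod ν ≤ C • σ.prod ν := by
    rw [← Measure.prod_smul_left]
    exact Measure.prod_mono hle le_rfl
  have hprod' : σ.prod ν ≤ μ.prod ν := Measure.prod_mono hge le_rfl
  have htr : ∀ f : EuclideanSpace ℝ (Fin n) → ℝ, Integrable f → Integrable (fun y => f (x₀ + y)) :=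
    fun f hf => hf.comp_add_left x₀
  have hint : ∀ f : EuclideanSpace ℝ (Fin n) → ℝ, Integrable f →
      Integrable (fun p : S × Ioi (0 : ℝ) => f (x₀ + (p.2 : ℝ) • (p.1 : EuclideanSpace ℝ (Fin n))))
        (μ.prod ν) := fun f hf =>
    Integrable.of_measure_le_smul ENNReal.ofReal_ne_top hprod (polar_integrable hn (htr f hf)).1
  constructor
  · have h1 := (hint W hWi).integral_prod_right
    refine (integrable_volumeIoiPow (f := fun s => ∫ θ : S,
      W (x₀ + s • (θ : EuclideanSpace ℝ (Fin n))) ∂μ) h1).congr_fun ?_ measurableSet_Ioi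
    intro s hs
    exact (integral_sphere_hausdorff hn x₀ W hs).symm
  · rintro φ hφc hφ0 ⟨M, hM⟩
    have hφd : ∀ (s : Ioi (0 : ℝ)) (θ : S),
        dist (x₀ + (s : ℝ) • (θ : EuclideanSpace ℝ (Fin n))) x₀ = s := by
      intro s θ
      simp [dist_eq_norm, norm_smul, abs_of_pos s.2.out]
    have hWφ : Integrable (fun x => W x * φ (dist x x₀)) := by
      refine hWi.mul_bdd (c := M) (by fun_prop) (.of_forall fun x => ?_)
      rw [Real.norm_of_nonneg (hφ0 _)]; exact hM _
    have hi := hint _ hWφ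
    calc ∫ x, W x * φ (dist x x₀)
        = ∫ y, W (x₀ + y) * φ (dist (x₀ + y) x₀) :=
          (integral_add_left_eq_self (fun x => W x * φ (dist x x₀)) x₀).symm
      _ = _ := (polar_integrable hn (htr _ hWφ)).2
      _ ≤ ∫ p : S × Ioi (0 : ℝ), W (x₀ + (p.2 : ℝ) • (p.1 : EuclideanSpace ℝ (Fin n))) *
            φ (dist (x₀ + (p.2 : ℝ) • (p.1 : EuclideanSpace ℝ (Fin n))) x₀) ∂(μ.prod ν) :=
          integral_mono_measure hprod' (.of_forall fun p => mul_nonneg (hW0 _) (hφ0 _)) hi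
      _ = ∫ s : Ioi (0 : ℝ), φ s * ∫ θ : S, W (x₀ + (s : ℝ) • (θ : EuclideanSpace ℝ (Fin n))) ∂μ ∂ν := by
          rw [integral_prod_symm _ hi]
          refine integral_congr_ae (.of_forall fun s => ?_)
          simp only [hφd, integral_mul_const]
          rw [mul_comm]
      _ = ∫ s in Ioi (0 : ℝ), s ^ (n - 1) * (φ s * ∫ θ : S,
            W (x₀ + s • (θ : EuclideanSpace ℝ (Fin n))) ∂μ) :=
          integral_volumeIoiPow (n - 1) (fun s => φ s * ∫ θ : S,
            W (x₀ + s • (θ : EuclideanSpace ℝ (Fin n))) ∂μ)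
      _ = _ := by
          refine setIntegral_congr_fun measurableSet_Ioi fun s hs => ?_
          simp only []
          rw [integral_sphere_hausdorff hn x₀ W hs]
          ring

/-! ### The one-dimensional optimization -/

/-- On a finite measure space, integrability of `G ≥ 0` gives that of `G ^ δ`, as
`G ^ δ ≤ 1 + G`. -/
lemma integrable_rpow_of_le_one {α : Type*} [MeasurableSpace α] {μ : Measure α}
    [IsFiniteMeasure μ] {G : α → ℝ} {δ : ℝ} (hδ : δ ∈ Ioc (0 : ℝ) 1) (hG0 : ∀ x, 0 ≤ G x)
    (hG : Integrable G μ) : Integrable (fun x => G x ^ δ) μ := by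
  refine Integrable.mono' ((integrable_const (1 : ℝ)).add hG)
    (hG.aestronglyMeasurable.aemeasurable.pow_const δ).aestronglyMeasurable
    (.of_forall fun x => ?_)
  rw [Real.norm_of_nonneg (Real.rpow_nonneg (hG0 x) _)]
  simp only [Pi.add_apply]
  rcases le_total (G x) 1 with h | h
  · linarith [Real.rpow_le_one (hG0 x) h hδ.1.le, hG0 x]
  · linarith [Real.rpow_le_self_of_one_le h hδ.2]

/-- The inequality relating the optimal one-dimensional energy `(∫ 1 / G)⁻¹` to `∫ G ^ δ`. It is
Hölder's inequality with exponents `1 + δ` and `(1 + δ) / δ`, applied to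
`1 = G ^ (δ / (1 + δ)) * G ^ (-δ / (1 + δ))`. -/
lemma inv_integral_inv_le {α : Type*} [MeasurableSpace α] {μ : Measure α} [IsFiniteMeasure μ]
    (hμ : 0 < μ.real univ) {G : α → ℝ} {δ e : ℝ} (hδ : δ ∈ Ioc (0 : ℝ) 1) (he : 0 < e)
    (hGe : ∀ x, e ≤ G x) (hG : Integrable G μ) :
    0 < ∫ x, (G x)⁻¹ ∂μ ∧ (∫ x, (G x)⁻¹ ∂μ)⁻¹ ≤
      (μ.real univ) ^ (-(1 + 1 / δ)) * (∫ x, G x ^ δ ∂μ) ^ (1 / δ) := by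
  have hδ0 := hδ.1
  have hG0 : ∀ x, 0 < G x := fun x => he.trans_le (hGe x)
  have hGm := hG.aestronglyMeasurable.aemeasurable
  have hI1 := integrable_rpow_of_le_one hδ (fun x => (hG0 x).le) hG
  have hI2 : Integrable (fun x => (G x)⁻¹) μ := by
    refine Integrable.of_bound hGm.inv.aestronglyMeasurable e⁻¹ (.of_forall fun x => ?_)
    rw [Real.norm_of_nonneg (inv_nonneg.2 (hG0 x).le)]
    exact inv_anti₀ he (hGe x)
  have hpq : (1 + δ).HolderConjugate ((1 + δ) / δ) := by
    rw [Real.holderConjugate_iff]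
    refine ⟨by linarith, ?_⟩
    field_simp
  have e1 : ∀ x, (G x ^ (δ / (1 + δ))) ^ (1 + δ) = G x ^ δ := fun x => by
    rw [← Real.rpow_mul (hG0 x).le]; congr 1; field_simp
  have e2 : ∀ x, (G x ^ (-(δ / (1 + δ)))) ^ ((1 + δ) / δ) = (G x)⁻¹ := fun x => by
    rw [← Real.rpow_mul (hG0 x).le, ← Real.rpow_neg_one]; congr 1; field_simp
  have hM1 : MemLp (fun x => G x ^ (δ / (1 + δ))) (ENNReal.ofReal (1 + δ)) μ := by
    rw [← integrable_norm_rpow_iff (hGm.pow_const _).aestronglyMeasurable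
      (by simp; linarith) ENNReal.ofReal_ne_top, ENNReal.toReal_ofReal (by linarith)]
    refine hI1.congr (.of_forall fun x => ?_)
    simp only []
    rw [Real.norm_of_nonneg (Real.rpow_nonneg (hG0 x).le _), e1]
  have hM2 : MemLp (fun x => G x ^ (-(δ / (1 + δ)))) (ENNReal.ofReal ((1 + δ) / δ)) μ := by
    rw [← integrable_norm_rpow_iff (hGm.pow_const _).aestronglyMeasurable
      (by simp; positivity) ENNReal.ofReal_ne_top, ENNReal.toReal_ofReal (by positivity)]
    refine hI2.congr (.of_forall fun x => ?_)
    simp only []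
    rw [Real.norm_of_nonneg (Real.rpow_nonneg (hG0 x).le _), e2]
  have h := integral_mul_le_Lp_mul_Lq_of_nonneg hpq
    (.of_forall fun x => Real.rpow_nonneg (hG0 x).le _)
    (.of_forall fun x => Real.rpow_nonneg (hG0 x).le _) hM1 hM2
  simp only [e1, e2] at h
  have e3 : ∀ x, G x ^ (δ / (1 + δ)) * G x ^ (-(δ / (1 + δ))) = 1 := fun x => by
    rw [← Real.rpow_add (hG0 x)]; simp
  simp only [e3, integral_const, smul_eq_mul, mul_one] at h
  set L := μ.real univ
  have hP0 : 0 ≤ ∫ x, G x ^ δ ∂μ := integral_nonneg fun x => Real.rpow_nonneg (hG0 x).le _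
  have hQ0 : 0 ≤ ∫ x, (G x)⁻¹ ∂μ := integral_nonneg fun x => inv_nonneg.2 (hG0 x).le
  set P := ∫ x, G x ^ δ ∂μ
  set Q := ∫ x, (G x)⁻¹ ∂μ
  have hpow := Real.rpow_le_rpow hμ.le h (by positivity : 0 ≤ 1 + 1 / δ)
  rw [Real.mul_rpow (Real.rpow_nonneg hP0 _) (Real.rpow_nonneg hQ0 _), ← Real.rpow_mul hP0,
    ← Real.rpow_mul hQ0, show 1 / (1 + δ) * (1 + 1 / δ) = 1 / δ by field_simp; ring,
    show 1 / ((1 + δ) / δ) * (1 + 1 / δ) = 1 by field_simp; ring, Real.rpow_one] at hpow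
  have hL := Real.rpow_pos_of_pos hμ (1 + 1 / δ)
  have hQ : 0 < Q := by
    rcases hQ0.eq_or_lt with h0 | h0
    · rw [← h0, mul_zero] at hpow; linarith
    · exact h0
  refine ⟨hQ, ?_⟩
  rw [Real.rpow_neg hμ.le, inv_mul_eq_div, le_div_iff₀ hL, inv_mul_le_iff₀ hQ]
  linarith

/-- An integrable function with values in `Icc 0 M` is, a.e. on `Ioo a b`, the limit of continuous
functions with values in `Icc 0 M` and support inside `Ioo a b`: forward averages over intervals of
length `1 / (k + 1)`, which converge by Lebesgue's differentiation theorem, times cutoffs. -/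
lemma exists_continuous_approx {a b M : ℝ} {h : ℝ → ℝ} (hM : ∀ x, h x ∈ Icc 0 M)
    (hi : Integrable h) :
    ∃ ψ : ℕ → ℝ → ℝ, (∀ k, Continuous (ψ k)) ∧ (∀ k x, ψ k x ∈ Icc 0 M) ∧
      (∀ k, tsupport (ψ k) ⊆ Ioo a b) ∧
      ∀ᵐ x ∂(volume.restrict (Ioo a b)), Tendsto (fun k => ψ k x) atTop (𝓝 (h x)) := by
  have hM0 : 0 ≤ M := (hM 0).1.trans (hM 0).2
  let K : ℕ → ℝ := fun k => (k : ℝ) + 1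
  have hK : ∀ k, 0 < K k := fun k => by positivity
  let H : ℝ → ℝ := fun x => ∫ t in (0 : ℝ)..x, h t
  have hHc : Continuous H := intervalIntegral.continuous_primitive (fun _ _ => hi.intervalIntegrable) 0
  let χ : ℕ → ℝ → ℝ := fun k x => max 0 (min 1 (K k * min (x - a) (b - x) - 1))
  have hχc : ∀ k, Continuous (χ k) := fun k => by fun_prop
  have hχ0 : ∀ k x, 0 ≤ χ k x := fun k x => le_max_left _ _
  have hχ1 : ∀ k x, χ k x ≤ 1 := fun k x => max_le zero_le_one (min_le_left _ _)
  have hav : ∀ k x, K k * (H (x + 1 / K k) - H x) ∈ Icc 0 M := by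
    intro k x
    have e : H (x + 1 / K k) - H x = ∫ t in x..(x + 1 / K k), h t :=
      intervalIntegral.integral_interval_sub_left hi.intervalIntegrable hi.intervalIntegrable
    have hx : x ≤ x + 1 / K k := by have := hK k; linarith [one_div_pos.2 this]
    rw [e]
    constructor
    · exact mul_nonneg (hK k).le (intervalIntegral.integral_nonneg hx fun t _ => (hM t).1)
    · have := intervalIntegral.integral_mono_on hx hi.intervalIntegrable
        (intervalIntegrable_const (c := M)) fun t _ => (hM t).2
      rw [intervalIntegral.integral_const, smul_eq_mul, add_sub_cancel_left] at this
      calc _ ≤ K k * (1 / K k * M) := mul_le_mul_of_nonneg_left this (hK k).le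
        _ = M := by have := (hK k).ne'; field_simp
  refine ⟨fun k x => χ k x * (K k * (H (x + 1 / K k) - H x)), fun k => ?_, fun k x => ⟨?_, ?_⟩,
    fun k => ?_, ?_⟩
  · have := hχc k
    fun_prop
  · exact mul_nonneg (hχ0 k x) (hav k x).1
  · calc _ ≤ 1 * M := mul_le_mul (hχ1 k x) (hav k x).2 (hav k x).1 zero_le_one
      _ = M := one_mul M
  · have hcl : IsClosed {x | 1 ≤ K k * min (x - a) (b - x)} :=
      isClosed_le continuous_const (by fun_prop)
    refine (closure_minimal (fun x hx => ?_) hcl).trans fun x hx => ?_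
    · by_contra hlt
      simp only [mem_ofPred_eq, not_le] at hlt
      refine hx ?_
      have : χ k x = 0 := max_eq_left ((min_le_right _ _).trans (by linarith))
      simp [this]
    · have hx' : 1 ≤ K k * min (x - a) (b - x) := hx
      have h1 : 0 < min (x - a) (b - x) := by
        by_contra hle
        have := mul_nonpos_of_nonneg_of_nonpos (hK k).le (not_lt.1 hle)
        linarith
      rw [lt_min_iff] at h1
      exact ⟨by linarith, by linarith⟩
  · have hd := ae_restrict_of_ae (s := Ioo a b) 
      (LocallyIntegrable.ae_hasDerivAt_integral hi.locallyIntegrable)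
    filter_upwards [hd, ae_restrict_mem measurableSet_Ioo] with x hx hxI
    have hKtop : Tendsto K atTop atTop :=
      tendsto_atTop_add_const_right _ _ tendsto_natCast_atTop_atTop
    have hslope : Tendsto (fun k => K k * (H (x + 1 / K k) - H x)) atTop (𝓝 (h x)) := by
      have h1 := (hasDerivAt_iff_tendsto_slope_zero.1 (hx 0))
      have h2 : Tendsto (fun k => 1 / K k) atTop (𝓝[≠] 0) := by
        refine tendsto_nhdsWithin_iff.2 ⟨?_, .of_forall fun k => (one_div_pos.2 (hK k)).ne'⟩
        simp only [one_div]
        exact hKtop.inv_tendsto_atTop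
      refine (h1.comp h2).congr fun k => ?_
      simp [H]
    have hχ : ∀ᶠ k in atTop, χ k x = 1 := by
      have hm : 0 < min (x - a) (b - x) := lt_min (by linarith [hxI.1]) (by linarith [hxI.2])
      filter_upwards [(hKtop.atTop_mul_const hm).eventually_ge_atTop 2] with k hk
      simp only [χ]
      rw [min_eq_left (by linarith), max_eq_right zero_le_one]
    refine hslope.congr' ?_
    filter_upwards [hχ] with k hk
    rw [hk, one_mul]

/-- Near-optimal radial slope: a continuous `ψ ≥ 0` of integral one, supported inside `Ioo a b`,
whose weighted energy `∫ g ψ²` exceeds the bound by at most `ε`. It approximates the normalized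
reciprocal of the regularized weight `g + e`. -/
lemma exists_profile {a b δ ε : ℝ} (hab : a < b) (hδ : δ ∈ Ioc (0 : ℝ) 1) (hε : 0 < ε)
    {g : ℝ → ℝ} (hg0 : ∀ s, 0 ≤ g s) (hg : IntegrableOn g (Ioc a b)) :
    ∃ ψ : ℝ → ℝ, Continuous ψ ∧ (∀ s, 0 ≤ ψ s) ∧ tsupport ψ ⊆ Ioo a b ∧ ∫ s, ψ s = 1 ∧
      ∫ s in Ioc a b, g s * ψ s ^ 2 ≤
        (b - a) ^ (-(1 + 1 / δ)) * (∫ s in Ioc a b, g s ^ δ) ^ (1 / δ) + ε := by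
  have hδ0 := hδ.1
  simp only [integral_Ioc_eq_integral_Ioo]
  rw [integrableOn_Ioc_iff_integrableOn_Ioo] at hg
  set μ := volume.restrict (Ioo a b) with hμdef
  have hL : μ.real univ = b - a := by simp [hμdef, measureReal_def, hab.le]
  have hP0 : 0 ≤ ∫ s, g s ^ δ ∂μ := integral_nonneg fun s => Real.rpow_nonneg (hg0 s) _
  set P := ∫ s, g s ^ δ ∂μ with hP
  -- regularize the weight so that its reciprocal is bounded
  obtain ⟨e, he, heε⟩ : ∃ e : ℝ, 0 < e ∧ (b - a) ^ (-(1 + 1 / δ)) *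
      (P + e ^ δ * (b - a)) ^ (1 / δ) < (b - a) ^ (-(1 + 1 / δ)) * P ^ (1 / δ) + ε := by
    have hc : Continuous (fun e : ℝ => (b - a) ^ (-(1 + 1 / δ)) *
        (P + e ^ δ * (b - a)) ^ (1 / δ)) := by
      have h1 : Continuous fun e : ℝ => e ^ δ := Real.continuous_rpow_const hδ0.le
      have h2 : Continuous fun e : ℝ => e ^ (1 / δ) := Real.continuous_rpow_const (by positivity)
      exact continuous_const.mul (h2.comp (continuous_const.add (h1.mul continuous_const)))
    have h0 := (hc.tendsto 0).mono_left (nhdsWithin_le_nhds (s := Ioi 0))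
    simp only [Real.zero_rpow hδ0.ne', zero_mul, add_zero] at h0
    obtain ⟨e, h1, h2⟩ := ((h0.eventually_lt_const (lt_add_of_pos_right _ hε)).and
      self_mem_nhdsWithin).exists
    exact ⟨e, h2, h1⟩
  have hGi : Integrable (fun s => g s + e) μ := hg.add (integrable_const e)
  obtain ⟨hQ, hQle⟩ := inv_integral_inv_le (μ := μ) (by rw [hL]; linarith) hδ he
    (fun s => le_add_of_nonneg_left (hg0 s)) hGi
  set Q := ∫ s, (g s + e)⁻¹ ∂μ with hQdef
  have hPe : ∫ s, (g s + e) ^ δ ∂μ ≤ P + e ^ δ * (b - a) := by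
    have hi := integrable_rpow_of_le_one hδ hg0 hg
    calc _ ≤ ∫ s, (g s ^ δ + e ^ δ) ∂μ := by
          refine integral_mono (integrable_rpow_of_le_one hδ
            (fun s => add_nonneg (hg0 s) he.le) hGi) (hi.add (integrable_const _)) fun s => ?_
          exact Real.rpow_add_le_add_rpow (hg0 s) he.le hδ0.le hδ.2
      _ = _ := by
          rw [integral_add hi (integrable_const _), integral_const, hL, smul_eq_mul, mul_comm (b - a)]
  have hQlt : Q⁻¹ < (b - a) ^ (-(1 + 1 / δ)) * P ^ (1 / δ) + ε := by
    refine hQle.trans_lt (lt_of_le_of_lt ?_ heε)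
    rw [hL]
    refine mul_le_mul_of_nonneg_left (Real.rpow_le_rpow ?_ hPe (by positivity))
      (Real.rpow_nonneg (by linarith) _)
    exact integral_nonneg fun s => Real.rpow_nonneg (add_nonneg (hg0 s) he.le) _
  -- the optimal profile is proportional to the reciprocal of the weight
  have hbd : ∀ s, (g s + e)⁻¹ ∈ Icc 0 e⁻¹ := fun s =>
    ⟨inv_nonneg.2 (add_nonneg (hg0 s) he.le), inv_anti₀ he (le_add_of_nonneg_left (hg0 s))⟩
  have hinv : Integrable (fun s => (g s + e)⁻¹) μ :=
    Integrable.of_bound hGi.aestronglyMeasurable.aemeasurable.inv.aestronglyMeasurable e⁻¹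
      (.of_forall fun s => by rw [Real.norm_of_nonneg (hbd s).1]; exact (hbd s).2)
  obtain ⟨ψ, hψc, hψM, hψs, hψl⟩ := exists_continuous_approx (a := a) (b := b) (M := e⁻¹)
    (h := (Ioo a b).indicator fun s => (g s + e)⁻¹) (fun s => by
      by_cases hs : s ∈ Ioo a b
      · rw [indicator_of_mem hs]; exact hbd s
      · rw [indicator_of_notMem hs]; exact ⟨le_rfl, inv_nonneg.2 he.le⟩)
    ((integrable_indicator_iff measurableSet_Ioo).2 hinv)
  have hψl' : ∀ᵐ s ∂μ, Tendsto (fun k => ψ k s) atTop (𝓝 (g s + e)⁻¹) := by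
    filter_upwards [hψl, ae_restrict_mem measurableSet_Ioo] with s h1 h2
    rwa [indicator_of_mem h2] at h1
  have hlim1 : Tendsto (fun k => ∫ s, ψ k s ∂μ) atTop (𝓝 Q) := by
    refine tendsto_integral_of_dominated_convergence (fun _ => e⁻¹)
      (fun k => (hψc k).aestronglyMeasurable) (integrable_const _)
      (fun k => .of_forall fun s => ?_) hψl'
    rw [Real.norm_of_nonneg (hψM k s).1]; exact (hψM k s).2
  have hlim2 : Tendsto (fun k => ∫ s, g s * ψ k s ^ 2 ∂μ) atTop
      (𝓝 (∫ s, g s * ((g s + e)⁻¹) ^ 2 ∂μ)) := by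
    refine tendsto_integral_of_dominated_convergence (fun s => g s * e⁻¹ ^ 2)
      (fun k => hg.aestronglyMeasurable.mul ((hψc k).pow 2).aestronglyMeasurable)
      (hg.mul_const _) (fun k => .of_forall fun s => ?_) ?_
    · rw [Real.norm_of_nonneg (mul_nonneg (hg0 s) (sq_nonneg _))]
      exact mul_le_mul_of_nonneg_left (pow_le_pow_left₀ (hψM k s).1 (hψM k s).2 2) (hg0 s)
    · filter_upwards [hψl'] with s hs
      exact (hs.pow 2).const_mul _
  -- energy of the unnormalized profile: `g / (g + e) ^ 2 ≤ 1 / (g + e)`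
  have hle : ∫ s, g s * ((g s + e)⁻¹) ^ 2 ∂μ ≤ Q := by
    refine integral_mono_of_nonneg (.of_forall fun s => mul_nonneg (hg0 s) (sq_nonneg _)) hinv
      (.of_forall fun s => ?_)
    have h1 : 0 < g s + e := add_pos_of_nonneg_of_pos (hg0 s) he
    simp only []
    rw [pow_two, ← mul_assoc]
    refine mul_le_of_le_one_left (inv_nonneg.2 h1.le) ?_
    rw [mul_inv_le_iff₀ h1]; linarith
  have hlim3 := hlim2.div (hlim1.pow 2) (pow_pos hQ 2).ne'
  have hlt : (∫ s, g s * ((g s + e)⁻¹) ^ 2 ∂μ) / Q ^ 2 <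
      (b - a) ^ (-(1 + 1 / δ)) * P ^ (1 / δ) + ε := by
    refine lt_of_le_of_lt ?_ hQlt
    rw [div_le_iff₀ (pow_pos hQ 2), pow_two, ← mul_assoc, inv_mul_cancel₀ hQ.ne', one_mul]
    exact hle
  -- after division by the squared integral, the energies tend to at most `Q⁻¹`, so some
  -- continuous profile is good enough
  obtain ⟨k, hk1, hk2⟩ := ((hlim3.eventually_lt_const hlt).and
    (hlim1.eventually_const_lt hQ)).exists
  set q := ∫ s, ψ k s ∂μ with hq
  refine ⟨fun s => q⁻¹ * ψ k s, continuous_const.mul (hψc k),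
    fun s => mul_nonneg (inv_nonneg.2 hk2.le) (hψM k s).1, ?_, ?_, ?_⟩
  · exact (tsupport_mul_subset_right (f := fun _ => q⁻¹) (g := ψ k)).trans (hψs k)
  · rw [integral_const_mul]
    have : ∫ s, ψ k s = q := by
      refine (setIntegral_eq_integral_of_forall_compl_eq_zero fun s hs => ?_).symm
      exact image_eq_zero_of_notMem_tsupport fun h => hs (hψs k h)
    rw [this, inv_mul_cancel₀ hk2.ne']
  · refine le_trans (le_of_eq ?_) hk1.le
    simp only [Pi.div_apply]
    rw [div_eq_mul_inv, ← integral_mul_const]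
    refine integral_congr_ae (.of_forall fun s => ?_)
    simp only []
    rw [mul_pow, inv_pow]; ring

/-! ### Radial cutoffs -/

/-- The radial cutoff with slope `-ψ`, namely `η x = 1 - ∫₀^|x - x₀| ψ`. It is `C¹` at the centre,
where the norm is not differentiable, because it is constant on `ball x₀ a`. -/
lemma exists_radial_cutoff {E : Type*} [NormedAddCommGroup E] [InnerProductSpace ℝ E]
    [FiniteDimensional ℝ E] (x₀ : E) {a b : ℝ} (ha : 0 < a) {ψ : ℝ → ℝ} (hψc : Continuous ψ)
    (hψ0 : ∀ s, 0 ≤ ψ s) (hψs : tsupport ψ ⊆ Ioo a b) (hψ1 : ∫ s, ψ s = 1) :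
    ∃ η : E → ℝ, ContDiff ℝ 1 η ∧ HasCompactSupport η ∧ tsupport η ⊆ ball x₀ b ∧
      (∀ x, 0 ≤ η x) ∧ (∀ x ∈ ball x₀ a, η x = 1) ∧
      ∀ x, ‖fderiv ℝ η x‖ ≤ ψ (dist x x₀) := by
  have hcomp : HasCompactSupport ψ :=
    isCompact_Icc.of_isClosed_subset (isClosed_tsupport ψ) (hψs.trans Ioo_subset_Icc_self)
  have hψi : Integrable ψ := hψc.integrable_of_hasCompactSupport hcomp
  have hz : ∀ s, s ∉ tsupport ψ → ψ s = 0 := fun s hs => image_eq_zero_of_notMem_tsupport hs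
  have hne : (tsupport ψ).Nonempty := by
    rw [nonempty_iff_ne_empty]
    intro h
    have h0 : ψ = 0 := tsupport_eq_empty_iff.1 h
    simp [h0] at hψ1
  -- the profile already vanishes beyond some radius `c < b`
  obtain ⟨c, hcb, hc⟩ : ∃ c < b, ∀ s ∈ tsupport ψ, s ≤ c :=
    ⟨sSup (tsupport ψ), (hψs (hcomp.isCompact.sSup_mem hne)).2, fun s hs =>
      le_csSup hcomp.isCompact.bddAbove hs⟩
  let F : ℝ → ℝ := fun r => 1 - ∫ t in (0 : ℝ)..r, ψ t
  have hFd : ∀ r, HasDerivAt F (-ψ r) r := fun r =>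
    (hψc.integral_hasStrictDerivAt 0 r).hasDerivAt.const_sub 1
  have hFc : ContDiff ℝ 1 F := by
    rw [contDiff_one_iff_deriv]
    refine ⟨fun r => (hFd r).differentiableAt, ?_⟩
    rw [show deriv F = fun r => -ψ r from funext fun r => (hFd r).deriv]
    exact hψc.neg
  have hF1 : ∀ r, 0 ≤ r → r < a → F r = 1 := by
    intro r h0 hr
    have : ∫ t in (0 : ℝ)..r, ψ t = 0 := by
      refine intervalIntegral.integral_zero_ae (.of_forall fun t ht => ?_)
      rw [uIoc_of_le h0] at ht
      exact hz t fun h => by linarith [(hψs h).1, ht.2]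
    simp [F, this]
  have hF0 : ∀ r, c ≤ r → F r = 0 := by
    intro r hr
    have : ∫ t in (0 : ℝ)..r, ψ t = 1 := by
      rw [← hψ1]
      refine intervalIntegral.integral_eq_integral_of_support_subset fun t ht => ?_
      have := subset_tsupport ψ ht
      exact ⟨ha.trans (hψs this).1, (hc t this).trans hr⟩
    simp [F, this]
  have hFn : ∀ r, 0 ≤ r → 0 ≤ F r := by
    intro r hr
    have : ∫ t in (0 : ℝ)..r, ψ t ≤ 1 := by
      rw [intervalIntegral.integral_of_le hr, ← hψ1]
      exact setIntegral_le_integral hψi (.of_forall hψ0)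
    simp only [F]; linarith
  have hη1 : ∀ x ∈ ball x₀ a, F (dist x x₀) = 1 := fun x hx => hF1 _ dist_nonneg hx
  have hloc : ∀ x ∈ ball x₀ a, (fun y => F (dist y x₀)) =ᶠ[𝓝 x] fun _ => (1 : ℝ) := by
    intro x hx
    filter_upwards [isOpen_ball.mem_nhds hx] with y hy using hη1 y hy
  have hout : ∀ x, x ∉ ball x₀ a → x ≠ x₀ := by
    rintro x hx rfl
    exact hx (mem_ball_self ha)
  have hdist : ∀ x, x ≠ x₀ → ContDiffAt ℝ 1 (fun y => dist y x₀) x := fun x hx =>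
    contDiffAt_id.dist ℝ contDiffAt_const hx
  have hts : tsupport (fun x => F (dist x x₀)) ⊆ closedBall x₀ c := by
    refine closure_minimal (fun x hx => ?_) isClosed_closedBall
    by_contra h
    exact hx (hF0 _ (not_le.1 h).le)
  refine ⟨fun x => F (dist x x₀), ?_, ?_, ?_, fun x => hFn _ dist_nonneg, hη1, ?_⟩
  · rw [contDiff_iff_contDiffAt]
    intro x
    by_cases hx : x ∈ ball x₀ a
    · exact contDiffAt_const.congr_of_eventuallyEq (hloc x hx)
    · exact hFc.contDiffAt.comp x (hdist x (hout x hx))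
  · exact (isCompact_closedBall x₀ c).of_isClosed_subset (isClosed_tsupport _) hts
  · exact hts.trans (closedBall_subset_ball hcb)
  · intro x
    by_cases hx : x ∈ ball x₀ a
    · rw [(hloc x hx).fderiv_eq]
      simpa using hψ0 _
    · have hd : DifferentiableAt ℝ (fun y => dist y x₀) x :=
        (hdist x (hout x hx)).differentiableAt one_ne_zero
      have h1 := (hFd (dist x x₀)).comp_hasFDerivAt x hd.hasFDerivAt
      have h2 : ‖fderiv ℝ (fun y => dist y x₀) x‖ ≤ 1 := by
        simpa using norm_fderiv_le_of_lipschitz ℝ (x₀ := x) (LipschitzWith.dist_left x₀)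
      have h3 : fderiv ℝ (fun y => F (dist y x₀)) x = _ := h1.fderiv
      rw [h3, norm_smul, norm_neg, Real.norm_of_nonneg (hψ0 _)]
      exact mul_le_of_le_one_right (hψ0 _) h2

end Auxiliary

/-! ### The cutoff estimate -/

/-- Bella–Schäffner type optimization over radial cutoffs: the infimum of
`∫_{B_{σ₁}(x₀) ∩ Ω} w |Dη|²` over admissible cutoffs `η` is controlled by the
`δ`-average of sphere-wise integrals of `w` with respect to `H^{n−1}`. -/
theorem stmt19 (n : ℕ) (hn : 3 ≤ n) (Ω : Set (EuclideanSpace ℝ (Fin n)))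
    (hΩo : IsOpen Ω) (hΩb : Bornology.IsBounded Ω)
    (x₀ : EuclideanSpace ℝ (Fin n)) (σ₁ σ₂ δ : ℝ)
    (hσ₂ : 0 < σ₂) (hσ : σ₂ < σ₁) (hδ : δ ∈ Set.Ioc (0:ℝ) 1)
    (w : EuclideanSpace ℝ (Fin n) → ℝ) (hw : ∀ x, 0 ≤ w x)
    (hwi : IntegrableOn w (Ω ∩ ball x₀ σ₁)) :
    sInf {r : ℝ | ∃ η : EuclideanSpace ℝ (Fin n) → ℝ,
        ContDiff ℝ 1 η ∧ HasCompactSupport η ∧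
        tsupport η ⊆ ball x₀ σ₁ ∧ (∀ x, 0 ≤ η x) ∧
        (∀ x ∈ ball x₀ σ₂, η x = 1) ∧
        r = ∫ x in ball x₀ σ₁ ∩ Ω, w x * ‖fderiv ℝ η x‖ ^ 2} ≤
      (σ₁ - σ₂) ^ (-(1 + 1 / δ)) *
        (∫ s in Set.Ioc σ₂ σ₁,
          (∫ x in sphere x₀ s ∩ Ω, w x ∂(μH[((n : ℝ) - 1)])) ^ δ) ^ (1 / δ) := by
  have hmeas : MeasurableSet (ball x₀ σ₁ ∩ Ω) := measurableSet_ball.inter hΩo.measurableSet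
  rw [Set.inter_comm] at hwi
  -- extend the weight by zero outside `ball x₀ σ₁ ∩ Ω`
  set W : EuclideanSpace ℝ (Fin n) → ℝ := (ball x₀ σ₁ ∩ Ω).indicator w with hW
  have hW0 : ∀ x, 0 ≤ W x := fun x => Set.indicator_nonneg (fun x _ => hw x) x
  have hWi : Integrable W := (integrable_indicator_iff hmeas).2 hwi
  obtain ⟨hgi, hpolar⟩ := polar_le (n := n) (by omega) x₀ hW0 hWi
  set g : ℝ → ℝ := fun s => ∫ x in sphere x₀ s, W x ∂μH[(n : ℝ) - 1] with hg
  have hg0 : ∀ s, 0 ≤ g s := fun s => integral_nonneg hW0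
  -- for radii below `σ₁` the sphere lies in the ball, so only the intersection with `Ω` remains;
  -- the endpoint `s = σ₁` is a null set
  have hgΩ : ∀ s ∈ Set.Ioo σ₂ σ₁, g s = ∫ x in sphere x₀ s ∩ Ω, w x ∂μH[(n : ℝ) - 1] := by
    intro s hs
    simp only [hg, hW]
    rw [setIntegral_indicator hmeas, ← Set.inter_assoc, Set.inter_eq_left.2 fun x hx => mem_ball.2 ((mem_sphere.1 hx).trans_lt hs.2)]
  have hrhs : ∫ s in Set.Ioc σ₂ σ₁,
      (∫ x in sphere x₀ s ∩ Ω, w x ∂(μH[((n : ℝ) - 1)])) ^ δ =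
      ∫ s in Set.Ioc σ₂ σ₁, g s ^ δ := by
    simp only [integral_Ioc_eq_integral_Ioo]
    exact setIntegral_congr_fun measurableSet_Ioo fun s hs =>
      congrArg (· ^ δ) (hgΩ s hs).symm
  rw [hrhs]
  have hgI : IntegrableOn g (Set.Ioc σ₂ σ₁) :=
    hgi.mono_set fun s hs => hσ₂.trans hs.1
  -- the infimum need not be attained, hence the loss of an arbitrary `ε`
  refine le_of_forall_pos_le_add fun ε hε => ?_
  obtain ⟨ψ, hψc, hψ0, hψs, hψ1, hψ⟩ := exists_profile hσ hδ hε hg0 hgI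
  obtain ⟨η, h1, h2, h3, h4, h5, h6⟩ := exists_radial_cutoff x₀ hσ₂ hψc hψ0 hψs hψ1
  have hz : ∀ s, s ∉ Set.Ioo σ₂ σ₁ → ψ s = 0 := fun s hs =>
    image_eq_zero_of_notMem_tsupport fun h => hs (hψs h)
  have hcomp : HasCompactSupport ψ :=
    isCompact_Icc.of_isClosed_subset (isClosed_tsupport ψ)
      (hψs.trans Set.Ioo_subset_Icc_self)
  obtain ⟨M, hM⟩ := hψc.bounded_above_of_compact_support hcomp
  have hM' : ∀ s, ψ s ^ 2 ≤ M ^ 2 := fun s => by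
    have := hM s
    rw [Real.norm_of_nonneg (hψ0 s)] at this
    exact pow_le_pow_left₀ (hψ0 s) this 2
  have key : ∫ x in ball x₀ σ₁ ∩ Ω, w x * ‖fderiv ℝ η x‖ ^ 2 ≤
      (σ₁ - σ₂) ^ (-(1 + 1 / δ)) * (∫ s in Set.Ioc σ₂ σ₁, g s ^ δ) ^ (1 / δ) + ε := by
    calc ∫ x in ball x₀ σ₁ ∩ Ω, w x * ‖fderiv ℝ η x‖ ^ 2
        = ∫ x, W x * ‖fderiv ℝ η x‖ ^ 2 := by
          rw [← integral_indicator hmeas]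
          simp only [hW, Set.indicator_mul_left]
      _ ≤ ∫ x, W x * ψ (dist x x₀) ^ 2 := by
          refine integral_mono_of_nonneg (.of_forall fun x => mul_nonneg (hW0 x) (sq_nonneg _))
            (hWi.mul_bdd (c := M ^ 2) (by fun_prop) (.of_forall fun x => ?_))
            (.of_forall fun x => mul_le_mul_of_nonneg_left
              (pow_le_pow_left₀ (norm_nonneg _) (h6 x) 2) (hW0 x))
          rw [Real.norm_of_nonneg (sq_nonneg _)]
          exact hM' _
      _ ≤ ∫ s in Set.Ioi (0 : ℝ), ψ s ^ 2 * g s :=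
          hpolar (fun s => ψ s ^ 2) (hψc.pow 2) (fun s => sq_nonneg _) ⟨M ^ 2, hM'⟩
      _ = ∫ s in Set.Ioc σ₂ σ₁, g s * ψ s ^ 2 := by
          simp only [mul_comm]
          refine (setIntegral_eq_of_subset_of_forall_sdiff_eq_zero measurableSet_Ioi
            (fun s hs => hσ₂.trans hs.1) fun s hs => ?_)
          rw [hz s fun h => hs.2 (Set.Ioo_subset_Ioc_self h)]
          simp
      _ ≤ _ := hψ
  refine le_trans (csInf_le ⟨0, ?_⟩ ⟨η, h1, h2, h3, h4, h5, rfl⟩) key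
  rintro r ⟨η', -, -, -, -, -, rfl⟩
  exact integral_nonneg fun x => mul_nonneg (hw x) (sq_nonneg _)
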